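/- Let −1 < β < 0 and ν > −1/2. Then sup_{x > 0} { ( e^{−βx} K_ν(x) / x^{ν−1} ) · ∫_0^x e^{βt} t^ν I_ν(t) dt } ≥ 1/(2(1+β)). -/

import Mathlib

open Real MeasureTheory

/-- Modified Bessel function of the first kind, `I_ν(x) = ∑_{k} (x/2)^{ν+2k} / (Γ(ν+k+1) k!)`. -/
noncomputable def besselI (ν x : ℝ) : ℝ :=
  ∑' k : ℕ, (x / 2) ^ (ν + 2 * (k : ℝ)) / (Real.Gamma (ν + (k : ℝ) + 1) * (Nat.factorial k : ℝ))

/-- Modified Bessel function of the second kind, `K_ν(x) = ∫_0^∞ e^{-x cosh t} cosh(ν t) dt`. -/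
noncomputable def besselK (ν x : ℝ) : ℝ :=
  ∫ t in Set.Ioi (0 : ℝ), Real.exp (-x * Real.cosh t) * Real.cosh (ν * t)

/-- Lower incomplete gamma function `γ(a, x) = ∫_0^x t^{a-1} e^{-t} dt`. -/
noncomputable def lowerIncGamma (a x : ℝ) : ℝ :=
  ∫ t in (0 : ℝ)..x, t ^ (a - 1) * Real.exp (-t)


section Aux

open Set Filter Topology

lemma aux_gamma_half (k : ℕ) :
    Real.Gamma ((k:ℝ) + 1/2) = (Nat.factorial (2*k) : ℝ) * √π / (4^k * (Nat.factorial k : ℝ)) := by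
  induction k with
  | zero => simp [-one_div, Real.Gamma_one_half_eq]
  | succ k ih =>
    have h : ((k+1:ℕ):ℝ) + 1/2 = ((k:ℝ) + 1/2) + 1 := by push_cast; ring
    rw [h, Real.Gamma_add_one (by positivity), ih]
    rw [show 2*(k+1) = (2*k+1)+1 by ring, Nat.factorial_succ, Nat.factorial_succ (2*k),
      Nat.factorial_succ k]
    push_cast
    field_simp
    ring

/-- real beta integral -/
lemma aux_beta (p q : ℝ) (hp : 0 < p) (hq : 0 < q) :
    ∫ x in Ioo (0:ℝ) 1, x ^ (p-1) * (1 - x) ^ (q-1) =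
      Real.Gamma p * Real.Gamma q / Real.Gamma (p+q) := by
  have h := ProbabilityTheory.beta_eq_betaIntegralReal p q hp hq
  rw [ProbabilityTheory.beta] at h
  rw [h, Complex.betaIntegral, intervalIntegral.integral_of_le (by norm_num),
      ← integral_Ioc_eq_integral_Ioo, ← RCLike.re_to_complex, ← integral_re]
  · refine setIntegral_congr_fun measurableSet_Ioc fun x ⟨hx1, hx₂⟩ ↦ ?_
    norm_cast
    rw [← Complex.ofReal_cpow, ← Complex.ofReal_cpow, RCLike.re_to_complex,
        Complex.re_mul_ofReal, Complex.ofReal_re]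
    all_goals linarith
  convert! Complex.betaIntegral_convergent (u := p) (v := q) (by simpa) (by simpa)
  rw [intervalIntegrable_iff_integrableOn_Ioc_of_le (by simp), IntegrableOn]

lemma aux_moment (a : ℝ) (ha : 0 < a) (k : ℕ) :
    ∫ u in Ioo (0:ℝ) 1, (u ^ (a-1) * (2-u) ^ (a-1)) * (1-u)^(2*k) =
      Real.Gamma ((k:ℝ)+1/2) * Real.Gamma a / (2 * Real.Gamma ((k:ℝ)+1/2+a)) := by
  have h1 := aux_beta ((k:ℝ)+1/2) a (by positivity) ha
  have h2 := integral_comp_rpow_Ioi_of_pos (E := ℝ)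
    (g := (Ioo (0:ℝ) 1).indicator (fun x => x ^ ((k:ℝ)+1/2-1) * (1 - x) ^ (a-1))) (p := 2) (by norm_num)
  have e1 : ∫ y in Ioi (0:ℝ), (Ioo (0:ℝ) 1).indicator (fun x => x ^ ((k:ℝ)+1/2-1) * (1 - x) ^ (a-1)) y
      = ∫ x in Ioo (0:ℝ) 1, x ^ ((k:ℝ)+1/2-1) * (1 - x) ^ (a-1) := by
    rw [setIntegral_indicator measurableSet_Ioo]
    congr 2
    ext x; simp +contextual
  rw [e1, h1] at h2
  have e2 : ∫ x in Ioi (0:ℝ), ((2:ℝ) * x ^ ((2:ℝ)-1)) • (Ioo (0:ℝ) 1).indicator (fun x => x ^ ((k:ℝ)+1/2-1) * (1 - x) ^ (a-1)) (x ^ (2:ℝ))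
      = ∫ x in Ioi (0:ℝ), (Ioo (0:ℝ) 1).indicator (fun s => 2 * (((1-s) ^ (a-1) * (1+s) ^ (a-1)) * s^(2*k))) x := by
    refine setIntegral_congr_fun measurableSet_Ioi fun x hx => ?_
    have hx0 : 0 < x := hx
    by_cases h : x < 1
    · have m1 : x ∈ Ioo (0:ℝ) 1 := ⟨hx0, h⟩
      have m2 : x ^ (2:ℝ) ∈ Ioo (0:ℝ) 1 :=
        ⟨by positivity, by rw [Real.rpow_two]; nlinarith⟩
      simp only [indicator_of_mem m1, indicator_of_mem m2, smul_eq_mul]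
      have : x ^ ((2:ℝ)-1) * (x^(2:ℝ)) ^ ((k:ℝ)+1/2-1) = x^(2*k) := by
        rw [← Real.rpow_mul hx0.le, ← Real.rpow_add hx0, ← Real.rpow_natCast]
        congr 1; push_cast; ring
      rw [← this, Real.rpow_two, show 1 - x^2 = (1-x)*(1+x) by ring,
        Real.mul_rpow (by linarith) (by linarith)]
      ring
    · have m1 : x ∉ Ioo (0:ℝ) 1 := fun hh => h hh.2
      have m2 : x ^ (2:ℝ) ∉ Ioo (0:ℝ) 1 := fun hh => by
        have := hh.2
        rw [Real.rpow_two] at this; nlinarith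
      simp only [indicator_of_notMem m1, indicator_of_notMem m2, smul_zero]
  rw [e2, setIntegral_indicator measurableSet_Ioo,
    show Ioi (0:ℝ) ∩ Ioo 0 1 = Ioo 0 1 by ext x; simp +contextual, integral_const_mul] at h2
  have h3 := intervalIntegral.integral_comp_sub_left
    (fun s : ℝ => ((1-s) ^ (a-1) * (1+s) ^ (a-1)) * s^(2*k)) (a := 0) (b := 1) 1
  rw [sub_self, sub_zero, intervalIntegral.integral_of_le zero_le_one,
    intervalIntegral.integral_of_le zero_le_one, integral_Ioc_eq_integral_Ioo,
    integral_Ioc_eq_integral_Ioo] at h3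
  have e3 : ∀ u : ℝ, ((1-(1-u)) ^ (a-1) * (1+(1-u)) ^ (a-1)) * (1-u)^(2*k) =
      (u ^ (a-1) * (2-u) ^ (a-1)) * (1-u)^(2*k) := by
    intro u; congr 3 <;> ring
  simp only [e3] at h3
  rw [h3]
  have := (Real.Gamma_pos_of_pos (show 0 < (k:ℝ)+1/2+a by positivity)).ne'
  field_simp at h2 ⊢
  linarith

lemma aux_two_sub (a u : ℝ) (h0 : 0 ≤ u) (h1 : u ≤ 1) : (2-u)^(a-1) ≤ 1 + 2^(a-1) := by
  rcases le_total 0 (a-1) with h | h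
  · have : (2-u)^(a-1) ≤ 2^(a-1) := Real.rpow_le_rpow (by linarith) (by linarith) h
    linarith
  · have : (2-u)^(a-1) ≤ 1 := Real.rpow_le_one_of_one_le_of_nonpos (by linarith) h
    have : (0:ℝ) ≤ 2^(a-1) := by positivity
    linarith

lemma aux_w_int (a : ℝ) (ha : 0 < a) :
    IntegrableOn (fun u : ℝ => u ^ (a-1) * (2-u) ^ (a-1)) (Ioo 0 1) := by
  have h : IntegrableOn (fun u : ℝ => u ^ (a-1)) (Ioo 0 1) := by
    rw [intervalIntegral.integrableOn_Ioo_rpow_iff (by norm_num)]; linarith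
  refine Integrable.mono' (h.mul_const (1 + 2^(a-1))) ?_ ?_
  · exact Measurable.aestronglyMeasurable (by fun_prop)
  · refine ae_restrict_of_forall_mem measurableSet_Ioo (fun u hu ↦ ?_)
    have h1 : 0 ≤ u^(a-1) := Real.rpow_nonneg hu.1.le _
    have h2 : 0 ≤ (2-u)^(a-1) := Real.rpow_nonneg (by linarith [hu.2]) _
    rw [Real.norm_of_nonneg (by positivity)]
    exact mul_le_mul_of_nonneg_left (aux_two_sub a u hu.1.le hu.2.le) h1

/-- The Poisson integral. -/
noncomputable def PI (a t : ℝ) : ℝ :=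
  ∫ u in Ioo (0:ℝ) 1, (u ^ (a-1) * (2-u) ^ (a-1)) * Real.cosh (t * (1-u))

lemma aux_poisson (a t : ℝ) (ha : 0 < a) :
    HasSum (fun k : ℕ => √π * Real.Gamma a / 2 * ((t/2)^(2*k) / (Real.Gamma ((k:ℝ)+1/2+a) * (Nat.factorial k : ℝ))))
      (PI a t) := by
  have h := hasSum_integral_of_dominated_convergence (μ := volume.restrict (Ioo (0:ℝ) 1))
    (F := fun (k:ℕ) (u:ℝ) => (u ^ (a-1) * (2-u) ^ (a-1)) * ((t*(1-u))^(2*k) / (Nat.factorial (2*k) : ℝ)))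
    (f := fun u => (u ^ (a-1) * (2-u) ^ (a-1)) * Real.cosh (t * (1-u)))
    (fun k u => (u ^ (a-1) * (2-u) ^ (a-1)) * (t^(2*k) / (Nat.factorial (2*k) : ℝ)))
    (fun n => Measurable.aestronglyMeasurable (by fun_prop))
    (fun n => ae_restrict_of_forall_mem measurableSet_Ioo (fun u hu ↦ by
      have h1 : 0 ≤ u^(a-1) := Real.rpow_nonneg hu.1.le _
      have h2 : 0 ≤ (2-u)^(a-1) := Real.rpow_nonneg (by linarith [hu.2]) _
      have h3 : 0 ≤ (t*(1-u))^(2*n) := (even_two_mul n).pow_nonneg _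
      have h4 : (t*(1-u))^(2*n) ≤ t^(2*n) := by
        rw [mul_pow]
        exact mul_le_of_le_one_right ((even_two_mul n).pow_nonneg _)
          (pow_le_one₀ (by linarith [hu.2]) (by linarith [hu.1]))
      rw [Real.norm_of_nonneg (by positivity)]
      exact mul_le_mul_of_nonneg_left (by gcongr) (by positivity)))
    (Eventually.of_forall fun u => (Real.hasSum_cosh t).summable.mul_left _)
    (by
      simp_rw [tsum_mul_left]
      exact (aux_w_int a ha).mul_const _)
    (Eventually.of_forall fun u => (Real.hasSum_cosh _).mul_left _)
  refine h.congr_fun ?_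
  intro k
  simp_rw [mul_pow, mul_div_assoc]
  have : ∀ u : ℝ, (u ^ (a-1) * (2-u) ^ (a-1)) * (t^(2*k) * ((1-u)^(2*k) / (Nat.factorial (2*k) : ℝ)))
    = ((u ^ (a-1) * (2-u) ^ (a-1)) * (1-u)^(2*k)) * (t^(2*k) / (Nat.factorial (2*k) : ℝ)) := by
    intro u; ring
  simp_rw [this]
  rw [integral_mul_const, aux_moment a ha, aux_gamma_half]
  have := (Real.Gamma_pos_of_pos (show 0 < (k:ℝ)+1/2+a by positivity)).ne'
  rw [div_pow, pow_mul 2 2]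
  field_simp
  norm_num

lemma aux_besselI (ν t : ℝ) (hν : -(1/2) < ν) (ht : 0 < t) :
    besselI ν t = (t/2)^ν * (2 / (√π * Real.Gamma (ν+1/2)) * PI (ν+1/2) t) := by
  have h := (aux_poisson (ν+1/2) t (by linarith)).mul_left
    ((t/2)^ν * (2 / (√π * Real.Gamma (ν+1/2))))
  rw [← mul_assoc, ← h.tsum_eq, besselI]
  congr 1; ext k
  have hG := (Real.Gamma_pos_of_pos (show 0 < ν+1/2 by linarith)).ne'
  have hG2 := (Real.Gamma_pos_of_pos (show 0 < ν+k+1 by linarith [show (0:ℝ) ≤ k by positivity])).ne'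
  rw [Real.rpow_add (by positivity), show (2 * (k:ℝ)) = ((2*k:ℕ):ℝ) by push_cast; ring,
    Real.rpow_natCast, show (k:ℝ)+1/2+(ν+1/2) = ν + k + 1 by ring]
  have : √π ≠ 0 := by positivity
  generalize Real.Gamma (ν+1/2) = G at *
  field_simp

lemma aux_PI_asymp (a : ℝ) (ha : 0 < a) :
    Tendsto (fun t : ℝ => t^a * Real.exp (-t) * PI a t) atTop (𝓝 (2^(a-1) * Real.Gamma a / 2)) := by
  set G : ℝ → ℝ → ℝ := fun t => (Iio t).indicator
    (fun v => v^(a-1) * (2 - v/t)^(a-1) * ((Real.exp (-v) + Real.exp (v - 2*t))/2)) with hG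
  have key : ∀ t : ℝ, 0 < t → t^a * Real.exp (-t) * PI a t = ∫ v in Ioi (0:ℝ), G t v := by
    intro t ht
    have h := integral_comp_mul_left_Ioi (G t) 0 ht
    rw [mul_zero, smul_eq_mul] at h
    have h2 : ∫ v in Ioi (0:ℝ), G t v = t * ∫ u in Ioi (0:ℝ), G t (t*u) := by
      rw [h]; field_simp
    rw [h2]
    have h3 : ∫ u in Ioi (0:ℝ), G t (t*u) = ∫ u in Ioi (0:ℝ), (Ioo (0:ℝ) 1).indicator
        (fun u => t^(a-1) * Real.exp (-t) * ((u ^ (a-1) * (2-u) ^ (a-1)) * Real.cosh (t * (1-u)))) u := by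
      refine setIntegral_congr_fun measurableSet_Ioi fun u hu => ?_
      have hu0 : 0 < u := hu
      by_cases h1 : u < 1
      · have m1 : u ∈ Ioo (0:ℝ) 1 := ⟨hu0, h1⟩
        have m2 : t * u ∈ Iio t := by simp only [mem_Iio]; nlinarith
        simp only [hG, indicator_of_mem m1, indicator_of_mem m2]
        rw [Real.mul_rpow ht.le hu0.le, mul_div_cancel_left₀ _ ht.ne', Real.cosh_eq]
        have e1 : Real.exp (-(t*u)) = Real.exp (-t) * Real.exp (t*(1-u)) := by
          rw [← Real.exp_add]; congr 1; ring
        have e2 : Real.exp (t*u-2*t) = Real.exp (-t) * Real.exp (-(t*(1-u))) := by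
          rw [← Real.exp_add]; congr 1; ring
        rw [e1, e2]; ring
      · have m1 : u ∉ Ioo (0:ℝ) 1 := fun hh => h1 hh.2
        have m2 : t * u ∉ Iio t := by simp only [mem_Iio]; nlinarith
        simp only [hG, indicator_of_notMem m1, indicator_of_notMem m2]
    rw [h3, setIntegral_indicator measurableSet_Ioo,
      show Ioi (0:ℝ) ∩ Ioo 0 1 = Ioo 0 1 by ext x; simp +contextual, integral_const_mul, PI,
      show t^a = t * t^(a-1) by
        nth_rewrite 2 [← Real.rpow_one t]
        rw [← Real.rpow_add ht]; congr 1; ring]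
    ring
  have hlim : Tendsto (fun t => ∫ v in Ioi (0:ℝ), G t v) atTop
      (𝓝 (∫ v in Ioi (0:ℝ), 2^(a-1)/2 * (Real.exp (-v) * v^(a-1)))) := by
    refine tendsto_integral_filter_of_dominated_convergence
      (fun v => (1 + 2^(a-1)) * (Real.exp (-v) * v^(a-1))) ?_ ?_ ?_ ?_
    · refine Eventually.of_forall fun t => Measurable.aestronglyMeasurable ?_
      exact Measurable.indicator (by fun_prop) measurableSet_Iio
    · filter_upwards [eventually_gt_atTop (0:ℝ)] with t ht
      refine ae_restrict_of_forall_mem measurableSet_Ioi fun v hv => ?_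
      have hv0 : 0 < v := hv
      have hv1 : 0 ≤ v^(a-1) := Real.rpow_nonneg hv0.le _
      have hp : (0:ℝ) ≤ 2^(a-1) := by positivity
      by_cases h : v < t
      · have m2 : v ∈ Iio t := h
        have hvt : v/t ≤ 1 := by rw [div_le_one ht]; exact h.le
        have h1 := aux_two_sub a (v/t) (by positivity) hvt
        have h2 : 0 ≤ (2-v/t)^(a-1) := Real.rpow_nonneg (by linarith) _
        simp only [hG, indicator_of_mem m2]
        rw [Real.norm_of_nonneg (by positivity)]
        have h3 : Real.exp (v-2*t) ≤ Real.exp (-v) := Real.exp_le_exp.2 (by linarith)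
        calc _ ≤ v^(a-1) * (1+2^(a-1)) * ((Real.exp (-v) + Real.exp (-v))/2) := by gcongr
          _ = _ := by ring
      · have m2 : v ∉ Iio t := h
        simp only [hG, indicator_of_notMem m2, norm_zero]
        positivity
    · exact (Real.GammaIntegral_convergent ha).const_mul _
    · refine ae_restrict_of_forall_mem measurableSet_Ioi fun v hv => ?_
      have hv0 : 0 < v := hv
      have t1 : Tendsto (fun t : ℝ => (2 - v/t)^(a-1)) atTop (𝓝 (2^(a-1))) := by
        have : Tendsto (fun t : ℝ => 2 - v/t) atTop (𝓝 (2-0)) :=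
          tendsto_const_nhds.sub (tendsto_const_nhds.div_atTop tendsto_id)
        rw [sub_zero] at this
        exact this.rpow_const (Or.inl (by norm_num))
      have t2 : Tendsto (fun t : ℝ => Real.exp (v - 2*t)) atTop (𝓝 0) := by
        refine Real.tendsto_exp_atBot.comp ?_
        refine tendsto_atBot_add_const_left _ v ?_ |>.congr (fun t => (sub_eq_add_neg _ _).symm)
        exact tendsto_neg_atTop_atBot.comp (tendsto_id.const_mul_atTop (by norm_num))
      have t3 := ((t1.const_mul (v^(a-1))).mul ((t2.const_add (Real.exp (-v))).div_const 2))
      have : v ^ (a - 1) * 2 ^ (a - 1) * ((Real.exp (-v) + 0) / 2) = 2^(a-1)/2 * (Real.exp (-v) * v^(a-1)) := by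
        ring
      rw [this] at t3
      refine t3.congr' ?_
      filter_upwards [eventually_gt_atTop v] with t ht
      have m2 : v ∈ Iio t := ht
      simp only [hG, indicator_of_mem m2]
  rw [integral_const_mul, ← Real.Gamma_eq_integral ha] at hlim
  rw [show (2:ℝ)^(a-1) * Real.Gamma a / 2 = 2^(a-1)/2 * Real.Gamma a by ring]
  refine hlim.congr' ?_
  filter_upwards [eventually_gt_atTop (0:ℝ)] with t ht
  exact (key t ht).symm

lemma aux_cosh_sub_one (y : ℝ) : Real.cosh y - 1 = 2 * Real.sinh (y/2)^2 := by
  have h := Real.cosh_two_mul (y/2)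
  have h2 := Real.cosh_sq (y/2)
  rw [show 2*(y/2) = y by ring] at h
  linarith

lemma aux_K_asymp (ν : ℝ) :
    Tendsto (fun x : ℝ => √x * Real.exp x * besselK ν x) atTop (𝓝 (√(π/2))) := by
  have key : ∀ x : ℝ, 0 < x → √x * Real.exp x * besselK ν x =
      ∫ s in Ioi (0:ℝ), Real.exp (-(x * (Real.cosh (s/√x) - 1))) * Real.cosh (ν * (s/√x)) := by
    intro x hx
    have hs : 0 < √x := Real.sqrt_pos.2 hx
    have h := integral_comp_mul_left_Ioi (fun t => Real.exp (-(x * (Real.cosh t - 1))) * Real.cosh (ν * t)) 0 (inv_pos.2 hs)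
    simp only [mul_zero, smul_eq_mul, inv_inv] at h
    simp only [div_eq_inv_mul]
    rw [h, besselK, mul_assoc, ← integral_const_mul]
    congr 2; ext t
    rw [← mul_assoc, ← Real.exp_add]; congr 2; ring
  have hlim : Tendsto (fun x : ℝ => ∫ s in Ioi (0:ℝ), Real.exp (-(x * (Real.cosh (s/√x) - 1))) * Real.cosh (ν * (s/√x)))
      atTop (𝓝 (∫ s in Ioi (0:ℝ), Real.exp (-(1/2) * s^2))) := by
    refine tendsto_integral_filter_of_dominated_convergence
      (fun s => Real.exp (-(1/2) * s^2) * Real.cosh (ν * s)) ?_ ?_ ?_ ?_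
    · refine Eventually.of_forall fun t => Measurable.aestronglyMeasurable (by fun_prop)
    · filter_upwards [eventually_ge_atTop (1:ℝ)] with x hx
      refine ae_restrict_of_forall_mem measurableSet_Ioi fun s hs => ?_
      have hs0 : 0 < s := hs
      have hx0 : 0 < x := by linarith
      have h1 : 1 ≤ √x := Real.one_le_sqrt.2 hx
      rw [Real.norm_of_nonneg (mul_nonneg (Real.exp_pos _).le (Real.cosh_pos _).le)]
      refine mul_le_mul ?_ ?_ (Real.cosh_pos _).le (Real.exp_pos _).le
      · rw [Real.exp_le_exp, aux_cosh_sub_one]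
        have h2 : s/√x/2 ≤ Real.sinh (s/√x/2) := Real.self_le_sinh_iff.2 (by positivity)
        have h3 : (s/√x/2)^2 ≤ Real.sinh (s/√x/2)^2 := by gcongr
        have h4 : (s/√x/2)^2 = s^2/x/4 := by rw [div_pow, div_pow, Real.sq_sqrt hx0.le]; norm_num
        rw [h4] at h3
        have h5 : x * (s^2/x/4) ≤ x * Real.sinh (s/√x/2)^2 := by gcongr
        have h6 : x * (s^2/x/4) = s^2/4 := by field_simp
        linarith
      · rw [Real.cosh_le_cosh, abs_mul, abs_mul]
        gcongr
        exact div_le_self hs0.le h1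
    · have h1 : ∀ c : ℝ, Integrable (fun s : ℝ => Real.exp (-(1/2) * s^2 + c * s)) := by
        intro c
        have h := ((integrable_exp_neg_mul_sq (b := 1/2) (by norm_num)).comp_sub_right c).const_mul (Real.exp (c^2/2))
        refine h.congr (Eventually.of_forall fun s => ?_)
        simp only
        rw [← Real.exp_add]; congr 1; ring
      refine (((h1 ν).add (h1 (-ν))).div_const 2).integrableOn.congr_fun (fun s _ => ?_) measurableSet_Ioi
      simp only [Pi.add_apply]
      rw [Real.exp_add, Real.exp_add, Real.cosh_eq, neg_mul ν s]; ring
    · refine ae_restrict_of_forall_mem measurableSet_Ioi fun s hs => ?_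
      have hr : Tendsto (fun x : ℝ => (√x)⁻¹) atTop (𝓝[≠] 0) := by
        have : Tendsto (fun x : ℝ => (√x)⁻¹) atTop (𝓝[>] 0) :=
          tendsto_inv_atTop_nhdsGT_zero.comp Real.tendsto_sqrt_atTop
        exact this.mono_right (nhdsWithin_mono _ (fun x (hx : 0 < x) => hx.ne'))
      have hr0 : Tendsto (fun x : ℝ => (√x)⁻¹) atTop (𝓝 0) := hr.mono_right nhdsWithin_le_nhds
      have hd : HasDerivAt (fun r : ℝ => Real.sinh (s/2 * r)) (s/2) 0 := by
        have := ((hasDerivAt_id (0:ℝ)).const_mul (s/2)).sinh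
        simpa using this
      have t1 := (hasDerivAt_iff_tendsto_slope_zero.1 hd).comp hr
      have t2 : Tendsto (fun x : ℝ => Real.cosh (ν * (s/√x))) atTop (𝓝 1) := by
        have : Tendsto (fun x : ℝ => Real.cosh (ν * (s * (√x)⁻¹))) atTop (𝓝 (Real.cosh (ν * (s * 0)))) :=
          (Real.continuous_cosh.tendsto _).comp ((hr0.const_mul s).const_mul ν)
        simpa [div_eq_mul_inv] using this
      have t3 := (Real.continuous_exp.tendsto _).comp (((t1.pow 2).const_mul 2).neg)
      have t4 := t3.mul t2
      rw [mul_one, show -(2*(s/2)^2) = -(1/2) * s^2 by ring] at t4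
      refine t4.congr' ?_
      filter_upwards [eventually_gt_atTop (0:ℝ)] with x hx
      simp only [Function.comp, zero_add, mul_zero, Real.sinh_zero, sub_zero, inv_inv, smul_eq_mul]
      rw [aux_cosh_sub_one, mul_pow, Real.sq_sqrt hx.le, show s / 2 * (√x)⁻¹ = s/√x/2 by ring]
      congr 2; ring
  rw [integral_gaussian_Ioi] at hlim
  have : √(π / (1/2)) / 2 = √(π/2) := by
    rw [show π / (1/2) = 2^2 * (π/2) by ring, Real.sqrt_mul (by norm_num), Real.sqrt_sq (by norm_num)]
    ring
  rw [this] at hlim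
  refine hlim.congr' ?_
  filter_upwards [eventually_gt_atTop (0:ℝ)] with t ht
  exact (key t ht).symm

lemma aux_K_nonneg (ν x : ℝ) : 0 ≤ besselK ν x :=
  integral_nonneg fun t => mul_nonneg (Real.exp_pos _).le (Real.cosh_pos _).le

lemma aux_K_bound (ν : ℝ) (hν : -(1/2) < ν) :
    ∃ C : ℝ, 0 ≤ C ∧ ∀ x : ℝ, 0 < x → x^(ν+2) * besselK ν x ≤ C := by
  set p := ν + 2 with hp
  have hp0 : 0 < p := by linarith
  have hpn : |ν| < p := by rw [abs_lt]; constructor <;> linarith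
  set g : ℝ → ℝ := fun t => (p^p * 2^p) * Real.exp (-(p-|ν|) * t) with hg
  have hgi : IntegrableOn g (Ioi 0) := (exp_neg_integrableOn_Ioi 0 (sub_pos.2 hpn)).const_mul _
  refine ⟨∫ t in Ioi (0:ℝ), g t, integral_nonneg fun t => by positivity, fun x hx => ?_⟩
  rw [besselK, ← integral_const_mul]
  refine integral_mono_of_nonneg (Eventually.of_forall fun t => ?_) hgi ?_
  · exact mul_nonneg (Real.rpow_nonneg hx.le _) (mul_nonneg (Real.exp_pos _).le (Real.cosh_pos _).le)
  · refine ae_restrict_of_forall_mem measurableSet_Ioi fun t ht => ?_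
    have ht0 : 0 < t := ht
    have hc := Real.cosh_pos t
    have h1 : (x * Real.cosh t)^p * Real.exp (-x * Real.cosh t) ≤ p^p := by
      have hy : 0 < x * Real.cosh t := by positivity
      rw [neg_mul]
      generalize x * Real.cosh t = y at hy
      have e1 : y/p ≤ Real.exp (y/p) := by linarith [Real.add_one_le_exp (y/p)]
      have e2 : (y/p)^p ≤ (Real.exp (y/p))^p := Real.rpow_le_rpow (by positivity) e1 hp0.le
      rw [← Real.exp_mul, div_mul_cancel₀ _ hp0.ne', Real.div_rpow hy.le hp0.le,
        div_le_iff₀ (by positivity)] at e2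
      rw [Real.exp_neg, ← div_eq_mul_inv, div_le_iff₀ (Real.exp_pos _)]
      linarith
    have h2 : Real.exp t / 2 ≤ Real.cosh t := by
      rw [Real.cosh_eq]; linarith [Real.exp_pos (-t)]
    have h3 : Real.exp (p*t) ≤ 2^p * Real.cosh t ^ p := by
      rw [← Real.mul_rpow (by norm_num) hc.le, mul_comm p t, Real.exp_mul]
      exact Real.rpow_le_rpow (Real.exp_pos _).le (by linarith) hp0.le
    have h4 : Real.cosh (ν*t) ≤ Real.exp (|ν| * t) := by
      rw [← Real.cosh_abs, abs_mul, abs_of_pos ht0, Real.cosh_eq]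
      have : Real.exp (-(|ν| * t)) ≤ Real.exp (|ν| * t) := Real.exp_le_exp.2 (by
        have : 0 ≤ |ν| * t := by positivity
        linarith)
      linarith
    rw [Real.mul_rpow hx.le hc.le] at h1
    have hcp : 0 < Real.cosh t ^ p := by positivity
    have h5 : x^p * Real.exp (-x * Real.cosh t) ≤ p^p * 2^p * Real.exp (-(p*t)) := by
      have hE : Real.exp (-(p*t)) * Real.exp (p*t) = 1 := by rw [← Real.exp_add]; simp
      have h6 : 1 ≤ Real.exp (-(p*t)) * (2^p * Real.cosh t ^ p) := by
        rw [← hE]; gcongr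
      have h7 : 0 ≤ x^p * Real.exp (-x * Real.cosh t) := by positivity
      calc x^p * Real.exp (-x * Real.cosh t)
          ≤ (x^p * Real.exp (-x * Real.cosh t)) * (Real.exp (-(p*t)) * (2^p * Real.cosh t ^ p)) :=
            le_mul_of_one_le_right h7 h6
        _ = (x^p * Real.cosh t ^ p * Real.exp (-x * Real.cosh t)) * (Real.exp (-(p*t)) * 2^p) := by ring
        _ ≤ p^p * (Real.exp (-(p*t)) * 2^p) := by gcongr
        _ = _ := by ring
    calc x^p * (Real.exp (-x * Real.cosh t) * Real.cosh (ν*t))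
        = (x^p * Real.exp (-x * Real.cosh t)) * Real.cosh (ν*t) := by ring
      _ ≤ (p^p * 2^p * Real.exp (-(p*t))) * Real.exp (|ν| * t) := by
          refine mul_le_mul h5 h4 (Real.cosh_pos _).le (by positivity)
      _ = g t := by
          rw [hg, mul_assoc, ← Real.exp_add]; simp only; congr 2; ring

lemma aux_lhop_one (N D N' D' : ℝ → ℝ) (c e : ℝ) (he : 0 < e)
    (hN : ∀ x, 0 < x → HasDerivAt N (N' x) x) (hD : ∀ x, 0 < x → HasDerivAt D (D' x) x)
    (hDt : Tendsto D atTop atTop) (h : ∀ᶠ x in atTop, N' x ≤ c * D' x) :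
    ∀ᶠ x in atTop, N x / D x ≤ c + e := by
  obtain ⟨X, hX0, hX⟩ := ((eventually_gt_atTop (0:ℝ)).and (eventually_forall_ge_atTop.2 h)).exists
  have hd : ∀ x, 0 < x → HasDerivAt (fun x => N x - c * D x) (N' x - c * D' x) x :=
    fun x hx => (hN x hx).sub ((hD x hx).const_mul c)
  have hanti : AntitoneOn (fun x => N x - c * D x) (Ici X) := by
    refine antitoneOn_of_deriv_nonpos (convex_Ici X)
      (fun x hx => (hd x (hX0.trans_le hx)).continuousAt.continuousWithinAt)
      (fun x hx => ?_) (fun x hx => ?_)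
    · rw [interior_Ici] at hx
      exact (hd x (hX0.trans hx)).differentiableAt.differentiableWithinAt
    · rw [interior_Ici] at hx
      rw [(hd x (hX0.trans hx)).deriv]
      linarith [hX x (le_of_lt hx)]
  set M := N X - c * D X with hM
  filter_upwards [eventually_ge_atTop X, hDt.eventually_gt_atTop 0,
    hDt.eventually_ge_atTop (M/e)] with x h1 h2 h3
  have h4 : N x - c * D x ≤ M := hanti (mem_Ici.2 le_rfl) h1 h1
  rw [div_le_iff₀ h2]
  rw [div_le_iff₀ he] at h3
  nlinarith

lemma aux_lhop (N D N' D' : ℝ → ℝ) (L : ℝ)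
    (hN : ∀ x, 0 < x → HasDerivAt N (N' x) x) (hD : ∀ x, 0 < x → HasDerivAt D (D' x) x)
    (hDt : Tendsto D atTop atTop) (hpos : ∀ᶠ x in atTop, 0 < D' x)
    (h : Tendsto (fun x => N' x / D' x) atTop (𝓝 L)) :
    Tendsto (fun x => N x / D x) atTop (𝓝 L) := by
  rw [tendsto_order]
  constructor
  · intro l hl
    have h1 : ∀ᶠ x in atTop, (fun x => - N' x) x ≤ (-(l + 2*(L-l)/3)) * D' x := by
      filter_upwards [hpos, (tendsto_order.1 h).1 (l + 2*(L-l)/3) (by linarith)] with x h1 h2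
      rw [lt_div_iff₀ h1] at h2
      linarith
    filter_upwards [aux_lhop_one (fun x => - N x) D _ D' _ ((L-l)/3) (by linarith)
      (fun x hx => (hN x hx).neg) hD hDt h1] with x hx
    rw [neg_div] at hx
    linarith
  · intro l hl
    have h1 : ∀ᶠ x in atTop, N' x ≤ (L + (l-L)/3) * D' x := by
      filter_upwards [hpos, (tendsto_order.1 h).2 (L + (l-L)/3) (by linarith)] with x h1 h2
      rw [div_lt_iff₀ h1] at h2
      linarith
    filter_upwards [aux_lhop_one N D _ D' _ ((l-L)/3) (by linarith) hN hD hDt h1] with x hx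
    linarith

lemma aux_PI_cont (a : ℝ) (ha : 0 < a) : Continuous (PI a) := by
  rw [continuous_iff_continuousAt]
  intro t0
  unfold PI
  refine continuousAt_of_dominated (bound := fun u => (u ^ (a-1) * (2-u) ^ (a-1)) * Real.cosh (|t0|+1)) ?_ ?_ ?_ ?_
  · exact Eventually.of_forall fun t => Measurable.aestronglyMeasurable (by fun_prop)
  · filter_upwards [Metric.ball_mem_nhds t0 one_pos] with t ht
    refine ae_restrict_of_forall_mem measurableSet_Ioo fun u hu => ?_
    have h1 : 0 ≤ u^(a-1) := Real.rpow_nonneg hu.1.le _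
    have h2 : 0 ≤ (2-u)^(a-1) := Real.rpow_nonneg (by linarith [hu.2]) _
    rw [Real.norm_of_nonneg (mul_nonneg (by positivity) (Real.cosh_pos _).le)]
    refine mul_le_mul_of_nonneg_left ?_ (by positivity)
    rw [Real.cosh_le_cosh, abs_mul, abs_of_pos (show 0 < 1-u by linarith [hu.2]),
      abs_of_nonneg (show 0 ≤ |t0|+1 by positivity)]
    rw [Metric.mem_ball, Real.dist_eq] at ht
    have h3 : |t| ≤ |t0| + 1 := by
      have := abs_sub_abs_le_abs_sub t t0
      linarith
    exact (mul_le_of_le_one_right (abs_nonneg _) (by linarith [hu.1])).trans h3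
  · exact (aux_w_int a ha).mul_const _
  · exact Eventually.of_forall fun u => by fun_prop

lemma aux_N (β ν : ℝ) (hν : -(1/2) < ν) :
    ∃ g : ℝ → ℝ, Continuous g ∧
      (∀ t, g t = 2^(-ν) * (2 / (√π * Real.Gamma (ν+1/2))) * (Real.exp (β*t) * PI (ν+1/2) t)) ∧
      (∀ x, 0 < x → (∫ t in (0 : ℝ)..x, Real.exp (β * t) * t ^ ν * besselI ν t)
        = ∫ t in (0 : ℝ)..x, t^(2*ν) * g t) := by
  refine ⟨_, ?_, fun t => rfl, fun x hx => ?_⟩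
  · have := aux_PI_cont (ν+1/2) (by linarith)
    fun_prop
  · rw [intervalIntegral.integral_of_le hx.le, intervalIntegral.integral_of_le hx.le]
    refine setIntegral_congr_fun measurableSet_Ioc fun t ht => ?_
    have ht0 : 0 < t := ht.1
    rw [aux_besselI ν t hν ht0, Real.div_rpow ht0.le (by norm_num), Real.rpow_neg (by norm_num),
      two_mul, Real.rpow_add ht0]
    ring

lemma aux_N_int (ν : ℝ) (hν : -(1/2) < ν) (g : ℝ → ℝ) (hg : Continuous g) (x : ℝ) :
    IntervalIntegrable (fun t => t^(2*ν) * g t) volume 0 x :=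
  (intervalIntegral.intervalIntegrable_rpow' (by linarith)).mul_continuousOn hg.continuousOn

lemma aux_N_asymp (β ν : ℝ) (hβ0 : -1 < β) (hν : -(1/2) < ν) :
    Tendsto (fun x => (∫ t in (0 : ℝ)..x, Real.exp (β * t) * t ^ ν * besselI ν t) /
      (Real.exp ((1+β)*x) * x^(ν-1/2))) atTop (𝓝 (1 / √(2*π) / (1+β))) := by
  obtain ⟨g, hgc, hg, hN⟩ := aux_N β ν hν
  have hb : 0 < 1 + β := by linarith
  set a := ν + 1/2 with ha
  have ha0 : 0 < a := by linarith
  set c0 := 2^(-ν) * (2 / (√π * Real.Gamma a)) with hc0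
  have hG := Real.Gamma_pos_of_pos ha0
  have main : Tendsto (fun x => (∫ t in (0 : ℝ)..x, t^(2*ν) * g t) /
      (Real.exp ((1+β)*x) * x^(ν-1/2))) atTop (𝓝 (1 / √(2*π) / (1+β))) := by
    have hz : Tendsto (fun x : ℝ => (1+β) + (ν-1/2)/x) atTop (𝓝 (1+β)) := by
      have := (tendsto_const_nhds (x := ν-1/2)).div_atTop (tendsto_id (α := ℝ) (x := atTop))
      simpa using this.const_add (1+β)
    refine aux_lhop _ _ (fun x => x^(2*ν) * g x)
      (fun x => (Real.exp ((1+β)*x) * x^(ν-1/2)) * ((1+β) + (ν-1/2)/x)) _ ?_ ?_ ?_ ?_ ?_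
    · intro x hx
      refine intervalIntegral.integral_hasDerivAt_right (aux_N_int ν hν g hgc x) ?_ ?_
      · exact (Measurable.stronglyMeasurable (by fun_prop)).stronglyMeasurableAtFilter
      · exact (Real.continuousAt_rpow_const _ _ (Or.inl hx.ne')).mul hgc.continuousAt
    · intro x hx
      have h1 : HasDerivAt (fun x : ℝ => Real.exp ((1+β)*x)) (Real.exp ((1+β)*x) * ((1+β)*1)) x :=
        ((hasDerivAt_id x).const_mul (1+β)).exp
      have h2 := h1.mul (Real.hasDerivAt_rpow_const (x := x) (p := ν-1/2) (Or.inl hx.ne'))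
      refine h2.congr_deriv ?_
      rw [Real.rpow_sub_one hx.ne']
      field_simp
    · have := tendsto_exp_mul_div_rpow_atTop (-(ν-1/2)) (1+β) hb
      refine this.congr' ?_
      filter_upwards [eventually_gt_atTop (0:ℝ)] with x hx
      rw [Real.rpow_neg hx.le, div_inv_eq_mul]
    · filter_upwards [eventually_gt_atTop (0:ℝ), (tendsto_order.1 hz).1 0 hb] with x hx h2
      positivity
    · have t1 := ((aux_PI_asymp a ha0).const_mul c0).div hz hb.ne'
      have hval : c0 * (2^(a-1) * Real.Gamma a / 2) = 1 / √(2*π) := by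
        rw [hc0, show a - 1 = ν + (-(1/2)) by rw [ha]; ring, Real.rpow_add (by norm_num),
          Real.rpow_neg (by norm_num) ν, Real.rpow_neg (by norm_num) (1/2), ← Real.sqrt_eq_rpow,
          Real.sqrt_mul (by norm_num)]
        have : (2:ℝ)^ν ≠ 0 := by positivity
        field_simp
      rw [hval] at t1
      refine t1.congr' ?_
      filter_upwards [eventually_gt_atTop (0:ℝ)] with x hx
      simp only [Pi.div_apply]
      rw [← div_div]
      congr 1
      rw [eq_div_iff (by positivity), hg]
      have e1 : x^(2*ν) = x^a * x^(ν-1/2) := by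
        rw [← Real.rpow_add hx]; congr 1; rw [ha]; ring
      have e2 : Real.exp (β*x) = Real.exp (-x) * Real.exp ((1+β)*x) := by
        rw [← Real.exp_add]; congr 1; ring
      rw [e1, e2]; ring
  refine main.congr' ?_
  filter_upwards [eventually_gt_atTop (0:ℝ)] with x hx
  rw [hN x hx]

lemma aux_F_asymp (β ν : ℝ) (hβ0 : -1 < β) (hν : -(1/2) < ν) :
    Tendsto (fun x : ℝ => (Real.exp (-β * x) * besselK ν x / x ^ (ν - 1)) *
        ∫ t in (0 : ℝ)..x, Real.exp (β * t) * t ^ ν * besselI ν t) atTop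
      (𝓝 (1 / (2 * (1 + β)))) := by
  have h := (aux_K_asymp ν).mul (aux_N_asymp β ν hβ0 hν)
  have hb : 0 < 1 + β := by linarith
  have hval : √(π/2) * (1 / √(2*π) / (1+β)) = 1 / (2*(1+β)) := by
    have h1 : √(2*π) = 2 * √(π/2) := by
      rw [show 2 * π = 2^2 * (π/2) by ring, Real.sqrt_mul (by norm_num), Real.sqrt_sq (by norm_num)]
    have : √(π/2) ≠ 0 := by positivity
    rw [h1]
    generalize √(π/2) = r at *
    field_simp
  rw [hval] at h
  refine h.congr' ?_
  filter_upwards [eventually_gt_atTop (0:ℝ)] with x hx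
  have e1 : x^(ν-1/2) = x^(ν-1) * √x := by
    rw [Real.sqrt_eq_rpow, ← Real.rpow_add hx]; congr 1; ring
  have e2 : Real.exp ((1+β)*x) = Real.exp x * Real.exp (β*x) := by
    rw [← Real.exp_add]; congr 1; ring
  have : √x ≠ 0 := by positivity
  rw [e1, e2, neg_mul, Real.exp_neg]
  field_simp

lemma aux_bdd (β ν : ℝ) (hβ0 : -1 < β) (hβ1 : β < 0) (hν : -(1/2) < ν) :
    BddAbove ((fun x : ℝ => (Real.exp (-β * x) * besselK ν x / x ^ (ν - 1)) *
        ∫ t in (0 : ℝ)..x, Real.exp (β * t) * t ^ ν * besselI ν t) '' Set.Ioi 0) := by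
  obtain ⟨X, hX0, hX⟩ := ((eventually_gt_atTop (0:ℝ)).and (eventually_forall_ge_atTop.2
    ((aux_F_asymp β ν hβ0 hν).eventually_le_const (lt_add_one _)))).exists
  obtain ⟨C, hC0, hC⟩ := aux_K_bound ν hν
  obtain ⟨g, hgc, -, hN⟩ := aux_N β ν hν
  obtain ⟨M, hM⟩ := (isCompact_Icc (a := (0:ℝ)) (b := X)).exists_bound_of_continuousOn hgc.continuousOn
  have hM0 : 0 ≤ M := (norm_nonneg _).trans (hM 0 ⟨le_rfl, hX0.le⟩)
  have h2v : 0 < 2*ν+1 := by linarith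
  refine ⟨max (1 / (2 * (1 + β)) + 1) (Real.exp (-β*X) * (M/(2*ν+1)) * C), ?_⟩
  rintro _ ⟨x, hx, rfl⟩
  have hx0 : 0 < x := hx
  rcases le_total X x with h | h
  · exact (hX x h).trans (le_max_left _ _)
  · refine le_trans ?_ (le_max_right _ _)
    simp only
    rw [hN x hx0]
    have h1 : ∫ t in (0 : ℝ)..x, t^(2*ν) * g t ≤ ∫ t in (0 : ℝ)..x, t^(2*ν) * M := by
      refine intervalIntegral.integral_mono_on hx0.le (aux_N_int ν hν g hgc x)
        (aux_N_int ν hν (fun _ => M) continuous_const x) fun t ht => ?_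
      refine mul_le_mul_of_nonneg_left ?_ (Real.rpow_nonneg ht.1 _)
      exact (le_abs_self _).trans (hM t ⟨ht.1, ht.2.trans h⟩)
    rw [intervalIntegral.integral_mul_const, integral_rpow (Or.inl (by linarith)),
      Real.zero_rpow h2v.ne', sub_zero] at h1
    have hK := aux_K_nonneg ν x
    have hE : Real.exp (-β*x) ≤ Real.exp (-β*X) := Real.exp_le_exp.2 (by nlinarith)
    calc _ ≤ (Real.exp (-β * x) * besselK ν x / x ^ (ν - 1)) * (x^(2*ν+1)/(2*ν+1) * M) := by
          gcongr
      _ = Real.exp (-β*x) * (M/(2*ν+1)) * (x^(ν+2) * besselK ν x) := by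
          have : x^(2*ν+1) = x^(ν+2) * x^(ν-1) := by
            rw [← Real.rpow_add hx0]; congr 1; ring
          rw [this]
          have : x^(ν-1) ≠ 0 := by positivity
          field_simp
      _ ≤ Real.exp (-β*X) * (M/(2*ν+1)) * C := by
          gcongr
          exact hC x hx0

end Aux

theorem stmt_16 (β ν : ℝ) (hβ0 : -1 < β) (hβ1 : β < 0) (hν : -(1/2) < ν) :
    sSup ((fun x : ℝ => (Real.exp (-β * x) * besselK ν x / x ^ (ν - 1)) *
        ∫ t in (0 : ℝ)..x, Real.exp (β * t) * t ^ ν * besselI ν t) '' Set.Ioi 0) ≥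
      1 / (2 * (1 + β)) := by
  refine le_of_tendsto (aux_F_asymp β ν hβ0 hν) ?_
  filter_upwards [Filter.eventually_gt_atTop (0:ℝ)] with x hx
  exact le_csSup (aux_bdd β ν hβ0 hβ1 hν) ⟨x, hx, rfl⟩
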